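/- arXiv:2105.07859 — 4 statements merged into one kernel-verified Lean document; each statement's English description precedes it below -/
import Mathlib

section
/- Let K be a semi-symmetric algebraic curvature tensor on a pseudo-Euclidean space (V,⟨·,·⟩), and let χ be the minimal polynomial of the Ricci operator Ric_K. Then every monic real polynomial P that is irreducible over ℝ, different from X, and divides χ satisfies P² ∤ χ, and X³ does not divide χ. Equivalently, χ = ∏ᵢ Pᵢ where the Pᵢ are pairwise coprime and each Pᵢ is either irreducible over ℝ or equal to X². -/
open Polynomial

/-- The linear map `a ↦ K u a v`, whose trace gives the Ricci curvature `ric(u,v)`. -/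
def ricMap {V : Type*} [AddCommGroup V] [Module ℝ V]
    (K : V →ₗ[ℝ] V →ₗ[ℝ] Module.End ℝ V) (u v : V) : V →ₗ[ℝ] V where
  toFun a := K u a v
  map_add' a b := by simp
  map_smul' r a := by simp

/-- Adjoint endomorphisms have the same trace. -/
lemma trace_adj {V : Type*} [AddCommGroup V] [Module ℝ V] [FiniteDimensional ℝ V]
    (B : LinearMap.BilinForm ℝ V) (hB : ∀ u v, B u v = B v u) (hBnd : B.Nondegenerate)
    (R S : Module.End ℝ V) (h : ∀ a t, B (R a) t = B (S t) a) :
    LinearMap.trace ℝ V R = LinearMap.trace ℝ V S := by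
  have e : Module.Dual.transpose (R := ℝ) R = (LinearMap.BilinForm.toDual B hBnd).conj S := by
    rw [LinearEquiv.conj_apply, LinearEquiv.eq_comp_toLinearMap_symm]
    ext t a
    simp only [LinearMap.comp_apply, LinearEquiv.coe_coe, Module.Dual.transpose_apply,
      LinearMap.BilinForm.toDual_def]
    rw [hB t, h]
  rw [← LinearMap.trace_transpose', e, LinearMap.trace_conj']

lemma bil_ext {V : Type*} [AddCommGroup V] [Module ℝ V]
    (B : LinearMap.BilinForm ℝ V) (hBnd : B.Nondegenerate)
    (x y : V) (h : ∀ t, B x t = B y t) : x = y := by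
  have : x - y = 0 := hBnd.1 _ (fun t => by simp [h])
  exact sub_eq_zero.mp this

theorem stmt2 {V : Type*} [AddCommGroup V] [Module ℝ V] [FiniteDimensional ℝ V]
    (B : LinearMap.BilinForm ℝ V) (hB : ∀ u v, B u v = B v u) (hBnd : B.Nondegenerate)
    (K : V →ₗ[ℝ] V →ₗ[ℝ] Module.End ℝ V)
    (hK1 : ∀ u v, K u v = - K v u)
    (hK2 : ∀ u v w t, B (K u v w) t = - B (K u v t) w)
    (hK3 : ∀ u v w t, B (K u v w) t = B (K w t u) v)
    (hK4 : ∀ u v w, K u v w + K v w u + K w u v = 0)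
    (hss : ∀ u v a b, K u v * K a b - K a b * K u v
        = K ((K u v) a) b + K a ((K u v) b))
    (Ric : Module.End ℝ V)
    (hRic : ∀ u v, B (Ric u) v = LinearMap.trace ℝ V (ricMap K u v)) :
    (∀ P : Polynomial ℝ, P.Monic → Irreducible P → P ≠ X →
        P ∣ minpoly ℝ Ric → ¬ (P ^ 2 ∣ minpoly ℝ Ric)) ∧
    ¬ ((X : Polynomial ℝ) ^ 3 ∣ minpoly ℝ Ric) := by
  have hsa : ∀ u v, B (Ric u) v = B u (Ric v) := by
    intro u v
    rw [hB u, hRic, hRic]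
    refine trace_adj B hB hBnd _ _ (fun a t => ?_)
    change B (K u a v) t = B (K v t u) a
    rw [hK3]
  have hcomm : ∀ x y u, Ric (K x y u) = K x y (Ric u) := by
    intro x y u
    refine bil_ext B hBnd _ _ (fun v => ?_)
    rw [hK2, hB (K x y v), hRic, hRic, eq_neg_iff_add_eq_zero, ← map_add]
    have e : ricMap K (K x y u) v + ricMap K u (K x y v)
        = K x y * ricMap K u v - ricMap K u v * K x y := by
      ext a
      have := LinearMap.congr_fun (hss x y u a) v
      simp only [LinearMap.sub_apply, LinearMap.add_apply, Module.End.mul_apply] at this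
      change K (K x y u) a v + K u a (K x y v) = K x y (K u a v) - K u (K x y a) v
      rw [sub_eq_iff_eq_add] at this
      rw [this]
      abel
    rw [e, map_sub, LinearMap.trace_mul_comm, sub_self]
  have hsw : ∀ u v w, K (Ric u) v w = K u (Ric v) w := by
    intro u v w
    refine bil_ext B hBnd _ _ (fun t => ?_)
    rw [hK3, hK3 u, ← hcomm, hsa]
  have hlin1 : ∀ u v w, K (Ric u) v w = Ric (K u v w) := by
    have hT : ∀ u v w, (K (Ric u) v w - Ric (K u v w))
        + (K (Ric w) u v - Ric (K w u v)) = 0 := by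
      intro u v w
      have h1 := hK4 (Ric u) v w
      have h2 := congrArg Ric (hK4 u v w)
      rw [map_add, map_add, map_zero] at h2
      rw [← hcomm, ← hsw] at h1
      have h3 := congrArg₂ (· - ·) h1 h2
      simp only [sub_zero] at h3
      rw [← h3]
      abel
    intro u v w
    have a1 := hT u v w
    have a2 := hT w u v
    have a3 := hT v w u
    rw [← sub_eq_zero]
    generalize K (Ric u) v w - Ric (K u v w) = x at *
    generalize K (Ric w) u v - Ric (K w u v) = y at *
    generalize K (Ric v) w u - Ric (K v w u) = z at *
    have : (2 : ℝ) • x = 0 := by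
      have : (2 : ℝ) • x = (x + y) - (y + z) + (z + x) := by rw [two_smul]; abel
      rw [this, a1, a2, a3]; simp
    simpa using this
  have hp1 : ∀ (p : ℝ[X]) (u v w), K (aeval Ric p u) v w = aeval Ric p (K u v w) := by
    intro p
    induction p using Polynomial.induction_on' with
    | add p q hp hq => intro u v w; simp [hp, hq]
    | monomial n a =>
      intro u v w
      rw [← C_mul_X_pow_eq_monomial]
      simp only [map_mul, aeval_C, map_pow, aeval_X, Module.End.mul_apply,
        Module.algebraMap_end_apply, map_smul, LinearMap.smul_apply]
      congr 1
      induction n generalizing u with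
      | zero => simp
      | succ n ih => rw [pow_succ, Module.End.mul_apply, ih, hlin1, Module.End.mul_apply]
  have hp2 : ∀ (p : ℝ[X]) (u v w), K u (aeval Ric p v) w = aeval Ric p (K u v w) := by
    intro p u v w
    rw [hK1, LinearMap.neg_apply, hp1, hK1 u v, LinearMap.neg_apply, map_neg]
  have key : ∀ p : ℝ[X], IsNilpotent (aeval Ric p) → minpoly ℝ Ric ∣ X * p := by
    intro p hn
    apply minpoly.dvd
    rw [mul_comm] at *
    rw [mul_comm, map_mul, aeval_X]
    ext u
    refine bil_ext B hBnd _ _ (fun v => ?_)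
    rw [Module.End.mul_apply, hRic]
    have e : ricMap K (aeval Ric p u) v = aeval Ric p * ricMap K u v := by
      ext a
      exact hp1 p u a v
    have hc : Commute (aeval Ric p) (ricMap K u v) := by
      ext a
      exact (hp2 p u a v).symm
    rw [e]
    have := LinearMap.isNilpotent_trace_of_isNilpotent (hc.isNilpotent_mul_right hn)
    simpa using this.eq_zero
  have hne : minpoly ℝ Ric ≠ 0 := minpoly.ne_zero (Algebra.IsIntegral.isIntegral Ric)
  refine ⟨fun P hm hi hX _ hd => ?_, fun hd => ?_⟩
  · obtain ⟨Q, hQ⟩ := hd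
    have hPQ : P * Q ≠ 0 := by
      rintro h
      apply hne
      rw [hQ, pow_two, mul_assoc, h, mul_zero]
    have h := key (P * Q) ⟨2, by
      rw [← map_pow, show (P * Q) ^ 2 = minpoly ℝ Ric * Q by rw [hQ]; ring, map_mul,
        minpoly.aeval, zero_mul]⟩
    rw [hQ, show P ^ 2 * Q = P * (P * Q) by ring] at h
    have h2 := (mul_dvd_mul_iff_right hPQ).mp h
    exact hX (eq_of_monic_of_associated hm monic_X (hi.associated_of_dvd irreducible_X h2))
  · obtain ⟨Q, hQ⟩ := hd
    have hPQ : X * (X * Q) ≠ 0 := by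
      rintro h
      apply hne
      rw [hQ, show X ^ 3 * Q = X * (X * (X * Q)) by ring, h, mul_zero]
    have h := key (X * Q) ⟨3, by
      rw [← map_pow, show (X * Q) ^ 3 = minpoly ℝ Ric * Q ^ 2 by rw [hQ]; ring, map_mul,
        minpoly.aeval, zero_mul]⟩
    rw [hQ, show X ^ 3 * Q = X * (X * (X * Q)) by ring] at h
    have h2 : (X : ℝ[X]) ∣ 1 := by
      apply (mul_dvd_mul_iff_right hPQ).mp
      rwa [one_mul]
    exact irreducible_X.not_isUnit (isUnit_of_dvd_one h2)
end

section
/- Let K be a semi-symmetric algebraic curvature tensor on a pseudo-Euclidean space (V,⟨·,·⟩), with Ricci operator Ric_K and minimal polynomial χ of Ric_K. Let W be either V₀ := ker(Ric_K²) or V_P := ker(P(Ric_K)) for a monic irreducible real factor P of χ different from X. Then W is invariant under the primitive holonomy of K: K(u,v)(W) ⊆ W for all u,v ∈ V. -/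
open Polynomial

theorem stmt4 {V : Type*} [AddCommGroup V] [Module ℝ V] [FiniteDimensional ℝ V]
    (B : LinearMap.BilinForm ℝ V) (hB : ∀ u v, B u v = B v u) (hBnd : B.Nondegenerate)
    (K : V →ₗ[ℝ] V →ₗ[ℝ] Module.End ℝ V)
    (hK1 : ∀ u v, K u v = - K v u)
    (hK2 : ∀ u v w t, B (K u v w) t = - B (K u v t) w)
    (hK3 : ∀ u v w t, B (K u v w) t = B (K w t u) v)
    (hK4 : ∀ u v w, K u v w + K v w u + K w u v = 0)
    (hss : ∀ u v a b, K u v * K a b - K a b * K u v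
        = K ((K u v) a) b + K a ((K u v) b))
    (Ric : Module.End ℝ V)
    (hRic : ∀ u v, B (Ric u) v = LinearMap.trace ℝ V (ricMap K u v))
    (W : Submodule ℝ V)
    (hW : W = LinearMap.ker (Ric ^ 2) ∨
      ∃ P : Polynomial ℝ, P.Monic ∧ Irreducible P ∧ P ≠ X ∧ P ∣ minpoly ℝ Ric ∧
        W = LinearMap.ker (Polynomial.aeval Ric P)) :
    ∀ u v : V, ∀ w ∈ W, K u v w ∈ W := by
  -- The Ricci operator commutes with every curvature operator.
  have hcomm : ∀ u v : V, Commute Ric (K u v) := by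
    intro u v
    change Ric * K u v = K u v * Ric
    have htr : ∀ x y, LinearMap.trace ℝ V (ricMap K (K u v x) y)
        = - LinearMap.trace ℝ V (ricMap K x (K u v y)) := by
      intro x y
      have h : ricMap K (K u v x) y = K u v * ricMap K x y - ricMap K x (K u v y)
          - ricMap K x y * K u v := by
        ext a
        have h1 := congrArg (fun f : Module.End ℝ V => f y) (hss u v x a)
        simp only [LinearMap.sub_apply, LinearMap.add_apply, Module.End.mul_apply] at h1
        change K (K u v x) a y = K u v (K x a y) - K x a (K u v y) - K x (K u v a) y
        rw [h1]
        abel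
      rw [h, map_sub, map_sub, LinearMap.trace_mul_comm]
      abel
    ext x
    have h0 : ∀ y, B (Ric (K u v x) - K u v (Ric x)) y = 0 := by
      intro y
      rw [map_sub, LinearMap.sub_apply, hRic, htr, ← hRic, hK2, hB (Ric x)]
      ring
    exact sub_eq_zero.mp (hBnd.1 _ h0)
  have key : ∀ Q : Polynomial ℝ, ∀ u v w, aeval Ric Q w = 0 → aeval Ric Q (K u v w) = 0 := by
    intro Q u v w hw
    have hc : Commute (aeval Ric Q) (K u v) :=
      Algebra.commute_of_mem_adjoin_singleton_of_commute
        (aeval_mem_adjoin_singleton ℝ Ric) (hcomm u v).symm |>.symm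
    have := congrArg (fun f : Module.End ℝ V => f w) hc.eq
    simp only [Module.End.mul_apply] at this
    rw [this, hw, map_zero]
  intro u v w hw
  rcases hW with rfl | ⟨P, -, -, -, -, rfl⟩
  · have := key (X ^ 2) u v w
    rw [map_pow, aeval_X] at this
    exact this hw
  · exact key P u v w hw
end

section
/- Let K be a semi-symmetric algebraic curvature tensor on a pseudo-Euclidean space (V,⟨·,·⟩), with Ricci operator Ric_K and minimal polynomial χ of Ric_K. Let W and W′ be two distinct subspaces from the family consisting of V₀ := ker(Ric_K²) and the subspaces V_P := ker(P(Ric_K)) for the monic irreducible real factors P of χ different from X. Then K(u,v) = 0 (as an endomorphism of V) whenever u ∈ W and v ∈ W′. -/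
open Polynomial

theorem stmt5 {V : Type*} [AddCommGroup V] [Module ℝ V] [FiniteDimensional ℝ V]
    (B : LinearMap.BilinForm ℝ V) (hB : ∀ u v, B u v = B v u) (hBnd : B.Nondegenerate)
    (K : V →ₗ[ℝ] V →ₗ[ℝ] Module.End ℝ V)
    (hK1 : ∀ u v, K u v = - K v u)
    (hK2 : ∀ u v w t, B (K u v w) t = - B (K u v t) w)
    (hK3 : ∀ u v w t, B (K u v w) t = B (K w t u) v)
    (hK4 : ∀ u v w, K u v w + K v w u + K w u v = 0)
    (hss : ∀ u v a b, K u v * K a b - K a b * K u v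
        = K ((K u v) a) b + K a ((K u v) b))
    (Ric : Module.End ℝ V)
    (hRic : ∀ u v, B (Ric u) v = LinearMap.trace ℝ V (ricMap K u v))
    (W W' : Submodule ℝ V)
    (hW : W = LinearMap.ker (Ric ^ 2) ∨
      ∃ P : Polynomial ℝ, P.Monic ∧ Irreducible P ∧ P ≠ X ∧ P ∣ minpoly ℝ Ric ∧
        W = LinearMap.ker (Polynomial.aeval Ric P))
    (hW' : W' = LinearMap.ker (Ric ^ 2) ∨
      ∃ P : Polynomial ℝ, P.Monic ∧ Irreducible P ∧ P ≠ X ∧ P ∣ minpoly ℝ Ric ∧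
        W' = LinearMap.ker (Polynomial.aeval Ric P))
    (hne : W ≠ W') :
    ∀ u ∈ W, ∀ v ∈ W', K u v = 0 := by
  have nd : ∀ x y : V, (∀ z, B x z = B y z) → x = y := by
    intro x y h
    have := hBnd.1 (x - y) (fun z => by simp [h z])
    exact sub_eq_zero.mp this
  -- self-adjointness of Ric
  have trsymm : ∀ u v, LinearMap.trace ℝ V (ricMap K u v) =
      LinearMap.trace ℝ V (ricMap K v u) := by
    intro u v
    have hconj : (B.toDual hBnd).conj (ricMap K u v) =
        Module.Dual.transpose (R := ℝ) (ricMap K v u) := by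
      ext f b
      obtain ⟨a, rfl⟩ := (B.toDual hBnd).surjective f
      simp only [LinearEquiv.conj_apply_apply, LinearEquiv.symm_apply_apply,
        LinearMap.BilinForm.toDual_def, Module.Dual.transpose_apply, LinearMap.comp_apply]
      change B (K u a v) b = B a (K v b u)
      rw [hK3, hB]
    rw [← LinearMap.trace_conj' (ricMap K u v) (B.toDual hBnd), hconj,
      LinearMap.trace_transpose']
  have sa : ∀ u v, B (Ric u) v = B u (Ric v) := by
    intro u v
    rw [hB u, hRic, hRic, trsymm]
  -- Ric commutes with curvature endomorphisms
  have comm : ∀ u v x, Ric (K u v x) = K u v (Ric x) := by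
    intro u v x
    apply nd
    intro y
    have h1 : ricMap K (K u v x) y + ricMap K x (K u v y) =
        K u v * ricMap K x y - ricMap K x y * K u v := by
      ext a
      have h := LinearMap.congr_fun (hss u v x a) y
      simp only [LinearMap.sub_apply, LinearMap.add_apply, Module.End.mul_apply] at h
      change K (K u v x) a y + K x a (K u v y) = K u v (K x a y) - K x (K u v a) y
      rw [eq_sub_iff_add_eq, add_right_comm, ← h]
      abel
    have h2 := congrArg (LinearMap.trace ℝ V) h1
    rw [map_add, map_sub, LinearMap.trace_mul_comm, sub_self, ← hRic, ← hRic] at h2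
    have h3 := hK2 u v (Ric x) y
    rw [hB (K u v y)] at h3
    linarith
  have shift : ∀ u v, K (Ric u) v = K u (Ric v) := by
    intro u v
    ext w
    apply nd
    intro t
    rw [hK3, hK3 u, ← comm, sa]
  have shiftp : ∀ (p : ℝ[X]) (u v : V), K (aeval Ric p u) v = K u (aeval Ric p v) := by
    intro p
    induction p using Polynomial.induction_on' with
    | add p q hp hq => intro u v; simp [hp, hq]
    | monomial n a =>
      have hpow : ∀ (n : ℕ) (u v : V), K ((Ric ^ n) u) v = K u ((Ric ^ n) v) := by
        intro n
        induction n with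
        | zero => intro u v; simp
        | succ n ih =>
          intro u v
          rw [pow_succ, Module.End.mul_apply, ih, shift, ← pow_succ, ← Module.End.mul_apply,
            ← pow_succ']
      intro u v
      simp [aeval_monomial, hpow, Module.algebraMap_end_apply]
  have key : ∀ (p q : ℝ[X]), IsCoprime p q → ∀ u ∈ LinearMap.ker (aeval Ric p),
      ∀ v ∈ LinearMap.ker (aeval Ric q), K u v = 0 := by
    rintro p q ⟨a, b, hab⟩ u hu v hv
    rw [LinearMap.mem_ker] at hu hv
    have h : u = aeval Ric (b * q) u := by
      have h := congrArg (fun r => aeval Ric r u) hab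
      simp only [map_add, map_mul, LinearMap.add_apply, Module.End.mul_apply, hu, map_zero,
        zero_add, map_one, Module.End.one_apply] at h
      simp only [map_mul, Module.End.mul_apply]
      exact h.symm
    rw [h, shiftp, map_mul, Module.End.mul_apply, hv, map_zero, map_zero]
  have cop : ∀ P Q : ℝ[X], P.Monic → Q.Monic → Irreducible P → Irreducible Q → P ≠ Q →
      IsCoprime P Q := by
    intro P Q hP hQ iP iQ hPQ
    refine iP.coprime_iff_not_dvd.mpr fun hd => hPQ ?_
    exact eq_of_monic_of_associated hP hQ (iP.associated_of_dvd iQ hd)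
  have hX : Ric ^ 2 = aeval Ric (X ^ 2 : ℝ[X]) := by simp
  rw [hX] at hW hW'
  rcases hW with rfl | ⟨P, mP, iP, nP, -, rfl⟩ <;>
    rcases hW' with rfl | ⟨Q, mQ, iQ, nQ, -, rfl⟩
  · exact absurd rfl hne
  · exact key _ _ (cop X Q monic_X mQ irreducible_X iQ nQ.symm).pow_left
  · exact key _ _ (cop P X mP monic_X iP irreducible_X nP).pow_right
  · exact key _ _ (cop P Q mP mQ iP iQ (by rintro rfl; exact hne rfl))
end

section
/- Let (V,⟨·,·⟩) be 4-dimensional with a basis (x,y,z,t) such that ⟨x,t⟩ = ⟨y,z⟩ = 1 and all other products of basis vectors vanish. Set π₁ = A_{x,z} + A_{t,y} and π₂ = A_{x,t} + A_{y,z}. For a,b,c ∈ ℝ let T = a·π₁∨π₁ + b·π₂∨π₂ + c·π₁∨π₂ (a bilinear map V × V → End(V)). Then: (i) T satisfies the algebraic Bianchi identity T(u,v)w + T(v,w)u + T(w,u)v = 0 for all u,v,w ∈ V if and only if b = −a; (ii) every such T with b = −a is invariant under 𝔤 := span{π₁, π₂}, i.e., [A, T(u,v)] = T(A u, v) + T(u,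 A v) for all A ∈ 𝔤 and all u,v ∈ V. -/
/-- The skew-symmetric endomorphism `A_{u,v} : w ↦ ⟨v,w⟩u − ⟨u,w⟩v`. -/
def Avec {V : Type*} [AddCommGroup V] [Module ℝ V]
    (B : LinearMap.BilinForm ℝ V) (u v : V) : Module.End ℝ V :=
  (B v).smulRight u - (B u).smulRight v

/-- For skew-symmetric endomorphisms `α, β`, the bilinear map
`(α∨β)(u,v) = ½(⟨β u, v⟩ α + ⟨α u, v⟩ β)`. -/
noncomputable def opVee {V : Type*} [AddCommGroup V] [Module ℝ V]
    (B : LinearMap.BilinForm ℝ V) (α β : Module.End ℝ V) (u v : V) : Module.End ℝ V :=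
  (1 / 2 : ℝ) • (B (β u) v • α + B (α u) v • β)

theorem stmt13 {V : Type*} [AddCommGroup V] [Module ℝ V]
    (B : LinearMap.BilinForm ℝ V) (hB : ∀ u v, B u v = B v u)
    (x y z t : V)
    (hli : LinearIndependent ℝ ![x, y, z, t])
    (hspan : Submodule.span ℝ {x, y, z, t} = ⊤)
    (hxt : B x t = 1) (hyz : B y z = 1)
    (hxx : B x x = 0) (hxy : B x y = 0) (hxz : B x z = 0) (hyy : B y y = 0)
    (hyt : B y t = 0) (hzz : B z z = 0) (hzt : B z t = 0) (htt : B t t = 0)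
    (a b c : ℝ)
    (π₁ π₂ : Module.End ℝ V)
    (hπ₁ : π₁ = Avec B x z + Avec B t y) (hπ₂ : π₂ = Avec B x t + Avec B y z)
    (T : V → V → Module.End ℝ V)
    (hT : T = fun u v => a • opVee B π₁ π₁ u v + b • opVee B π₂ π₂ u v
      + c • opVee B π₁ π₂ u v) :
    ((∀ u v w, T u v w + T v w u + T w u v = 0) ↔ b = -a) ∧
    (b = -a → ∀ A ∈ Submodule.span ℝ ({π₁, π₂} : Set (Module.End ℝ V)), ∀ u v,
      A * T u v - T u v * A = T (A u) v + T u (A v)) := by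
  have hc : ∀ v : V, ∃ p q r s : ℝ, v = p • x + q • y + r • z + s • t := by
    intro v
    have hv : v ∈ Submodule.span ℝ {x, y, z, t} := by rw [hspan]; trivial
    simp only [Submodule.mem_span_insert, Submodule.mem_span_singleton] at hv
    obtain ⟨p, _, ⟨q, _, ⟨r, _, ⟨s, rfl⟩, rfl⟩, rfl⟩, rfl⟩ := hv
    exact ⟨p, q, r, s, by module⟩
  have htx : B t x = 1 := by rw [hB, hxt]
  have hzy : B z y = 1 := by rw [hB, hyz]
  have hyx : B y x = 0 := by rw [hB, hxy]
  have hzx : B z x = 0 := by rw [hB, hxz]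
  have hty : B t y = 0 := by rw [hB, hyt]
  have htz : B t z = 0 := by rw [hB, hzt]
  have h1 : ∀ p q r s : ℝ, π₁ (p • x + q • y + r • z + s • t)
      = q • x + (-p) • y + (-s) • z + r • t := by
    intro p q r s
    subst hπ₁
    simp [Avec, htx, hzy, hyx, hzx, hty, htz, hxt, hyz, hxx, hxy, hxz, hyy, hyt, hzz, hzt, htt]
    module
  have h2 : ∀ p q r s : ℝ, π₂ (p • x + q • y + r • z + s • t)
      = p • x + q • y + (-r) • z + (-s) • t := by
    intro p q r s
    subst hπ₂
    simp [Avec, htx, hzy, hyx, hzx, hty, htz, hxt, hyz, hxx, hxy, hxz, hyy, hyt, hzz, hzt, htt]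
    module
  have hb : ∀ p q r s p' q' r' s' : ℝ, B (p • x + q • y + r • z + s • t)
      (p' • x + q' • y + r' • z + s' • t) = p * s' + q * r' + r * q' + s * p' := by
    intro p q r s p' q' r' s'
    simp [htx, hzy, hyx, hzx, hty, htz, hxt, hyz, hxx, hxy, hxz, hyy, hyt, hzz, hzt, htt]
  have hTe : ∀ u v w, T u v w = (a * B (π₁ u) v + c / 2 * B (π₂ u) v) • π₁ w
      + (b * B (π₂ u) v + c / 2 * B (π₁ u) v) • π₂ w := by
    intro u v w
    subst hT
    simp only [opVee, LinearMap.add_apply, LinearMap.smul_apply]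
    module
  have hx0 : x ≠ 0 := by
    rintro rfl
    simp at hxt
  refine ⟨⟨fun h => ?_, fun h => ?_⟩, fun h A hA u v => ?_⟩
  · have e := h ((1:ℝ) • x + (0:ℝ) • y + (0:ℝ) • z + (0:ℝ) • t)
      ((0:ℝ) • x + (1:ℝ) • y + (0:ℝ) • z + (0:ℝ) • t)
      ((0:ℝ) • x + (0:ℝ) • y + (1:ℝ) • z + (0:ℝ) • t)
    simp only [hTe, h1, h2, hb] at e
    have e2 : (a + b) • x = 0 := by
      rw [← e]; module
    rcases smul_eq_zero.mp e2 with e3 | e3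
    · linarith
    · exact absurd e3 hx0
  · intro u v w
    obtain ⟨p, q, r, s, rfl⟩ := hc u
    obtain ⟨p', q', r', s', rfl⟩ := hc v
    obtain ⟨p'', q'', r'', s'', rfl⟩ := hc w
    simp only [hTe, h1, h2, hb, h]
    module
  · obtain ⟨m, n, rfl⟩ := Submodule.mem_span_pair.mp hA
    ext w
    obtain ⟨p, q, r, s, rfl⟩ := hc u
    obtain ⟨p', q', r', s', rfl⟩ := hc v
    obtain ⟨p'', q'', r'', s'', rfl⟩ := hc w
    have hA' : ∀ p q r s : ℝ, (m • π₁ + n • π₂) (p • x + q • y + r • z + s • t)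
      = (m * q + n * p) • x + (n * q - m * p) • y + (- m * s - n * r) • z
        + (m * r - n * s) • t := by
      intro p q r s
      simp only [LinearMap.add_apply, LinearMap.smul_apply, h1, h2]
      module
    have hT' : ∀ (k l p q r s : ℝ), k • (q • x + (-p) • y + (-s) • z + r • t)
        + l • (p • x + q • y + (-r) • z + (-s) • t)
        = (k * q + l * p) • x + (l * q - k * p) • y + (- k * s - l * r) • z
        + (k * r - l * s) • t := by
      intro k l p q r s
      module
    simp only [LinearMap.sub_apply, LinearMap.add_apply, Module.End.mul_apply, hA', hTe, h1, h2,
      hb, hT', h]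
    module
end
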